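/- (Area growth estimate) Let 0 < λ ≤ K(x) ≤ Λ be a measurable function on ℝ² and let u be a C² solution of Δu + K e^{2u} = 0 on ℝ² with u ≤ M everywhere. Then there exist ε, C > 0 depending only on (M, λ, Λ) such that ∫_{B_R} e^{2u} dx ≤ C R^{2-ε} for all R ≥ 1. -/

import Mathlib

open MeasureTheory

noncomputable def lap (f : EuclideanSpace ℝ (Fin 2) → ℝ) (x : EuclideanSpace ℝ (Fin 2)) : ℝ :=
  ∑ i : Fin 2, fderiv ℝ (fun y => fderiv ℝ f y (EuclideanSpace.single i 1)) x
    (EuclideanSpace.single i 1)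

abbrev E2 := EuclideanSpace ℝ (Fin 2)

noncomputable def bw (y : E2) : ℝ := max (1 - ‖y‖ ^ 2) 0
noncomputable def bp (y : E2) : ℝ := (max (1 - ‖y‖ ^ 2) 0) ^ 2 / 4

lemma bw_cont : Continuous bw := by unfold bw; fun_prop
lemma bp_cont : Continuous bp := by unfold bp; fun_prop
lemma bw_nonneg (y : E2) : 0 ≤ bw y := le_max_right _ _
lemma bp_nonneg (y : E2) : 0 ≤ bp y := by unfold bp; positivity
lemma bw_zero {y : E2} (h : 1 ≤ ‖y‖) : bw y = 0 := by
  unfold bw; rw [max_eq_right]; nlinarith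
lemma bp_zero {y : E2} (h : 1 ≤ ‖y‖) : bp y = 0 := by
  have := bw_zero h
  unfold bw at this; unfold bp; rw [this]; norm_num
lemma bw_le_one (y : E2) : bw y ≤ 1 := by
  unfold bw; apply max_le <;> nlinarith [sq_nonneg ‖y‖]
lemma bp_le (y : E2) : bp y ≤ 1 / 4 := by
  have h1 := bw_le_one y
  have h0 := bw_nonneg y
  unfold bw at h0 h1; unfold bp
  nlinarith

lemma hcs_of {φ : E2 → ℝ} (h : ∀ y, 1 ≤ ‖y‖ → φ y = 0) : HasCompactSupport φ := by
  apply HasCompactSupport.of_support_subset_isCompact (isCompact_closedBall (0 : E2) 1)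
  intro y hy
  by_contra hc
  apply hy
  apply h
  simp at hc
  exact hc.le

lemma bw_cs : HasCompactSupport bw := hcs_of fun _ h => bw_zero h
lemma bp_cs : HasCompactSupport bp := hcs_of fun _ h => bp_zero h

lemma hasDerivAt_maxsq (t : ℝ) : HasDerivAt (fun t : ℝ => (max t 0) ^ 2) (2 * max t 0) t := by
  rcases lt_trichotomy t 0 with h | h | h
  · have : (fun t : ℝ => (max t 0) ^ 2) =ᶠ[nhds t] fun _ => 0 := by
      filter_upwards [gt_mem_nhds h] with s hs
      rw [max_eq_right hs.le]; norm_num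
    rw [max_eq_right h.le]
    simpa using (hasDerivAt_const t (0 : ℝ)).congr_of_eventuallyEq this
  · subst h
    rw [hasDerivAt_iff_isLittleO]
    have h1 : (fun s : ℝ => (max s 0) ^ 2 - (max (0:ℝ) 0) ^ 2 - (s - 0) • (2 * max (0:ℝ) 0)) = fun s : ℝ => (max s 0) ^ 2 := by
      ext s; simp
    rw [h1]
    have h2 : (fun s : ℝ => (max s 0) ^ 2) =O[nhds 0] fun s : ℝ => s ^ 2 := by
      apply Asymptotics.isBigO_of_le
      intro s
      rw [norm_pow, norm_pow]
      gcongr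
      simp only [Real.norm_eq_abs]
      rcases le_total s 0 with h | h
      · rw [max_eq_right h]; simp
      · rw [max_eq_left h]
    refine h2.trans_isLittleO ?_
    simpa using Asymptotics.isLittleO_pow_id (𝕜 := ℝ) (n := 2) (by norm_num)
  · have : (fun t : ℝ => (max t 0) ^ 2) =ᶠ[nhds t] fun t => t ^ 2 := by
      filter_upwards [lt_mem_nhds h] with s hs
      rw [max_eq_left hs.le]
    rw [max_eq_left h.le]
    simpa using (hasDerivAt_pow 2 t).congr_of_eventuallyEq this

lemma hasFDerivAt_bp (y : E2) : HasFDerivAt bp (-(bw y) • innerSL ℝ y) y := by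
  have h1 : HasFDerivAt (fun y : E2 => 1 - ‖y‖ ^ 2) (-(2 • innerSL ℝ y)) y :=
    (hasStrictFDerivAt_norm_sq y).hasFDerivAt.const_sub 1
  have h2 := ((hasDerivAt_maxsq (1 - ‖y‖ ^ 2)).div_const 4).comp_hasFDerivAt y h1
  have h3 : bp = (fun t : ℝ => (max t 0) ^ 2 / 4) ∘ (fun y : E2 => 1 - ‖y‖ ^ 2) := rfl
  rw [h3]
  refine h2.congr_fderiv ?_
  ext z
  simp [bw]
  ring

lemma fderiv_bp (y : E2) (i : Fin 2) : fderiv ℝ bp y (EuclideanSpace.single i 1) = - (bw y * y i) := by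
  rw [(hasFDerivAt_bp y).fderiv]
  simp [EuclideanSpace.inner_single_right]

noncomputable def VV (v : E2 → ℝ) (x : E2) (r : ℝ) : ℝ := ∫ y, bw y * v (x + r • y)
noncomputable def mm (f : E2 → ℝ) (x : E2) (r : ℝ) : ℝ := ∫ y, bp y * f (x + r • y)

lemma int_cs {φ g : E2 → ℝ} (h1 : Continuous φ) (h2 : HasCompactSupport φ) (h3 : Continuous g) :
    Integrable (fun y => φ y * g y) :=
  (h1.mul h3).integrable_of_hasCompactSupport h2.mul_right

lemma pd_contDiff {v : E2 → ℝ} (hv : ContDiff ℝ 2 v) (i : Fin 2) :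
    ContDiff ℝ 1 (fun y => fderiv ℝ v y (EuclideanSpace.single i 1)) :=
  (hv.fderiv_right (m := 1) (by norm_num)).clm_apply contDiff_const

lemma lap_cont {v : E2 → ℝ} (hv : ContDiff ℝ 2 v) : Continuous (lap v) := by
  unfold lap
  refine continuous_finsetSum _ fun i _ => ?_
  exact ((pd_contDiff hv i).continuous_fderiv (by norm_num)).clm_apply continuous_const

lemma decomp (y : E2) : y = ∑ i : Fin 2, y i • EuclideanSpace.single i (1:ℝ) := by
  ext j; fin_cases j <;> simp

lemma ibp {v : E2 → ℝ} (hv : ContDiff ℝ 2 v) (x : E2) (r : ℝ) :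
    ∫ y, bw y * fderiv ℝ v (x + r • y) y = r * mm (lap v) x r := by
  have key : ∀ i : Fin 2, ∫ y, bw y * (y i * fderiv ℝ v (x + r • y) (EuclideanSpace.single i 1)) =
      ∫ y, bp y * (r * fderiv ℝ (fun y => fderiv ℝ v y (EuclideanSpace.single i 1)) (x + r • y)
        (EuclideanSpace.single i 1)) := by
    intro i
    have hp := pd_contDiff hv i
    set g := fun y => fderiv ℝ v y (EuclideanSpace.single i 1) with hg
    have hd : ∀ y, HasFDerivAt (fun y => g (x + r • y)) (r • fderiv ℝ g (x + r • y)) y := by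
      intro y
      have h1 : HasFDerivAt (fun y : E2 => x + r • y) (r • ContinuousLinearMap.id ℝ E2) y :=
        ((hasFDerivAt_id y).const_smul r).const_add x
      have h2 := ((hp.differentiable (by norm_num)) (x + r • y)).hasFDerivAt.comp y h1
      refine HasFDerivAt.congr_fderiv (f := fun y => g (x + r • y)) h2 ?_
      ext z; simp
    have hdg : Continuous (fun y => fderiv ℝ g (x + r • y) (EuclideanSpace.single i 1)) :=
      ((hp.continuous_fderiv (by norm_num)).comp (by fun_prop)).clm_apply continuous_const
    have hgc : Continuous g := hp.continuous
    have := integral_mul_fderiv_eq_neg_fderiv_mul_of_integrable (μ := volume) (f := bp)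
      (g := fun y => g (x + r • y)) (v := EuclideanSpace.single i 1) ?_ ?_ ?_ ?_ ?_
    · simp only [fderiv_bp, (hd _).fderiv] at this
      simp only [smul_apply, smul_eq_mul, neg_mul, integral_neg, neg_neg] at this
      rw [this]
      congr 1; ext y; ring
    · simp only [fderiv_bp]
      have := int_cs (g := fun y : E2 => - (y i * g (x + r • y))) bw_cont bw_cs (by fun_prop)
      convert this using 2; ring
    · simp only [(hd _).fderiv]
      exact int_cs bp_cont bp_cs (continuous_const.mul hdg)
    · exact int_cs bp_cont bp_cs (by fun_prop)
    · exact fun y _ => (hasFDerivAt_bp y).differentiableAt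
    · exact fun y _ => (hd y).differentiableAt
  have h1 : ∀ y : E2, bw y * fderiv ℝ v (x + r • y) y =
      ∑ i : Fin 2, bw y * (y i * fderiv ℝ v (x + r • y) (EuclideanSpace.single i 1)) := by
    intro y
    conv_lhs => rw [decomp y]
    rw [map_sum, Finset.mul_sum]
    rw [← decomp y]
    simp
  simp_rw [h1]
  rw [integral_finsetSum]
  · simp_rw [key]
    rw [← integral_finsetSum]
    · unfold mm lap
      rw [← integral_const_mul]
      congr 1; ext y
      rw [Finset.mul_sum, Finset.mul_sum]
      refine Finset.sum_congr rfl fun i _ => ?_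
      ring
    · intro i _
      refine int_cs bp_cont bp_cs ?_
      have := (((pd_contDiff hv i).continuous_fderiv (by norm_num)).comp
        (g := fderiv ℝ (fun y => fderiv ℝ v y (EuclideanSpace.single i 1))) (f := fun y : E2 => x + r • y) (by fun_prop)).clm_apply (continuous_const (y := (EuclideanSpace.single i (1:ℝ) : E2)))
      exact continuous_const.mul this
  · intro i _
    refine int_cs bw_cont bw_cs ?_
    have := (pd_contDiff hv i).continuous
    have h2 : Continuous fun y : E2 => fderiv ℝ v (x + r • y) (EuclideanSpace.single i 1) :=
      this.comp (g := fun y => fderiv ℝ v y (EuclideanSpace.single i 1)) (by fun_prop)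
    exact Continuous.mul (by fun_prop) h2

lemma hasDerivAt_VV {v : E2 → ℝ} (hv : ContDiff ℝ 2 v) (x : E2) (r : ℝ) :
    HasDerivAt (VV v x) (r * mm (lap v) x r) r := by
  rw [← ibp hv]
  have hc1 : Continuous (fderiv ℝ v) := hv.continuous_fderiv (by norm_num)
  have hvc := hv.continuous
  obtain ⟨B, hB⟩ : ∃ B, ∀ p ∈ (fun q : ℝ × E2 => ‖bw q.2 * fderiv ℝ v (x + q.1 • q.2) q.2‖) ''
      (Metric.closedBall r 1 ×ˢ Metric.closedBall (0:E2) 1), p ≤ B := by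
    have : IsCompact (Metric.closedBall r 1 ×ˢ Metric.closedBall (0:E2) 1) :=
      (isCompact_closedBall _ _).prod (isCompact_closedBall _ _)
    have h2 := (this.image (f := fun q : ℝ × E2 => ‖bw q.2 * fderiv ℝ v (x + q.1 • q.2) q.2‖)
      (by have := bw_cont; fun_prop)).bddAbove
    exact h2
  refine (hasDerivAt_integral_of_dominated_loc_of_deriv_le (s := Metric.ball r 1)
    (bound := fun y => (Metric.closedBall (0:E2) 1).indicator (fun _ => B) y)
    (F := fun s y => bw y * v (x + s • y)) (F' := fun s y => bw y * fderiv ℝ v (x + s • y) y)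
    (Metric.ball_mem_nhds _ one_pos) ?_ ?_ ?_ ?_ ?_ ?_).2
  · refine Filter.Eventually.of_forall fun s => ?_
    have := bw_cont
    exact Continuous.aestronglyMeasurable (by fun_prop)
  · exact int_cs bw_cont bw_cs (by fun_prop)
  · have := bw_cont
    exact Continuous.aestronglyMeasurable (by fun_prop)
  · refine Filter.Eventually.of_forall fun y s hs => ?_
    by_cases hy : y ∈ Metric.closedBall (0:E2) 1
    · rw [Set.indicator_of_mem hy]
      exact hB _ ⟨(s, y), ⟨Metric.ball_subset_closedBall hs, hy⟩, rfl⟩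
    · rw [Set.indicator_of_notMem hy]
      have : bw y = 0 := bw_zero (by simp at hy; exact hy.le)
      simp [this]
  · exact (integrable_indicator_iff measurableSet_closedBall).2
      (integrableOn_const (isCompact_closedBall _ _).measure_lt_top.ne)
  · refine Filter.Eventually.of_forall fun y s hs => ?_
    have h1 : HasDerivAt (fun s : ℝ => x + s • y) y s := by
      simpa using ((hasDerivAt_id s).smul_const y).const_add x
    exact (((hv.differentiable (by norm_num)) (x + s • y)).hasFDerivAt.comp_hasDerivAt s h1).const_mul _

lemma cov (φ f : E2 → ℝ) (x : E2) {r : ℝ} (hr : 0 < r) :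
    r ^ 2 * ∫ y, φ y * f (x + r • y) = ∫ q, φ (r⁻¹ • (q - x)) * f q := by
  have h1 := Measure.integral_comp_smul (volume : Measure E2) (fun p => φ (r⁻¹ • p) * f (x + p)) r
  have h2 := integral_add_left_eq_self (μ := (volume : Measure E2)) (fun q => φ (r⁻¹ • (q - x)) * f q) x
  simp only [add_sub_cancel_left] at h2
  rw [← h2]
  simp only [inv_smul_smul₀ hr.ne', finrank_euclideanSpace, Fintype.card_fin, smul_eq_mul] at h1
  rw [h1, abs_of_pos (by positivity)]
  field_simp

def sqr (x : E2) (r : ℝ) : Set E2 := {y | ∀ i, x i ≤ y i ∧ y i < x i + r}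

lemma sqr_eq (x : E2) (r : ℝ) : sqr x r = (MeasurableEquiv.toLp 2 (Fin 2 → ℝ)).symm ⁻¹'
    (Set.univ.pi fun i => Set.Ico (x i) (x i + r)) := by
  ext y; simp [sqr, Set.mem_pi]

lemma sqr_meas (x : E2) (r : ℝ) : MeasurableSet (sqr x r) := by
  rw [sqr_eq]
  exact (MeasurableEquiv.measurable _) (MeasurableSet.univ_pi fun i => measurableSet_Ico)

lemma sqr_vol (x : E2) (r : ℝ) : volume (sqr x r) = ENNReal.ofReal r ^ 2 := by
  rw [sqr_eq, (EuclideanSpace.volume_preserving_symm_measurableEquiv_toLp (Fin 2)).measure_preimage_equiv,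
    Real.volume_pi_Ico]
  simp

lemma norm_le_of_coord {a : E2} {b c : ℝ} (h : ∀ i, |a i| ≤ b) (hc : 0 ≤ c) (hbc : 2 * b ^ 2 ≤ c ^ 2) :
    ‖a‖ ≤ c := by
  have h2 : ‖a‖ ^ 2 ≤ c ^ 2 := by
    rw [EuclideanSpace.norm_sq_eq, Fin.sum_univ_two]
    have h0 := h 0
    have h1 := h 1
    simp only [Real.norm_eq_abs]
    have a0 := abs_nonneg (a 0)
    have a1 := abs_nonneg (a 1)
    nlinarith
  exact le_of_sq_le_sq h2 hc

lemma coord_le (a : E2) (i : Fin 2) : |a i| ≤ ‖a‖ := by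
  simpa using PiLp.norm_apply_le a i

lemma sqr_int {f : E2 → ℝ} (hf : Continuous f) (x : E2) (r : ℝ) : IntegrableOn f (sqr x r) := by
  have : sqr x r ⊆ Metric.closedBall x (2 * |r|) := by
    intro y hy
    rw [mem_closedBall_iff_norm]
    refine norm_le_of_coord (b := |r|) (fun i => ?_) (by positivity) (by nlinarith [sq_nonneg |r|])
    have := hy i
    simp only [PiLp.sub_apply]
    rw [abs_le]
    constructor <;> linarith [le_abs_self r]
  exact (hf.continuousOn.integrableOn_compact (isCompact_closedBall _ _)).mono_set this

lemma mass_le {f : E2 → ℝ} (hf : Continuous f) (x : E2) {r b : ℝ} (hr : 0 ≤ r)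
    (h : ∀ y ∈ sqr x r, f y ≤ b) : ∫ y in sqr x r, f y ≤ b * r ^ 2 := by
  have h1 : ∫ y in sqr x r, f y ≤ ∫ y in sqr x r, b :=
    setIntegral_mono_on (sqr_int hf x r) (sqr_int continuous_const x r) (sqr_meas x r) h
  refine h1.trans ?_
  rw [setIntegral_const, measureReal_def, sqr_vol]
  simp [ENNReal.toReal_ofReal hr, mul_comm]

noncomputable def corner (x : E2) (l : ℝ) {n : ℕ} (p : Fin 2 → Fin n) : E2 :=
  WithLp.toLp 2 fun i => x i + l * (p i : ℕ)

lemma corner_apply (x : E2) (l : ℝ) {n : ℕ} (p : Fin 2 → Fin n) (i : Fin 2) :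
    corner x l p i = x i + l * (p i : ℕ) := rfl

lemma cover (x : E2) {l : ℝ} (hl : 0 < l) {n : ℕ} {y : E2} (hy : y ∈ sqr x (n * l)) :
    ∃ p : Fin 2 → Fin n, y ∈ sqr (corner x l p) l := by
  have h : ∀ i, ∃ k : Fin n, x i + l * (k : ℕ) ≤ y i ∧ y i < x i + l * (k : ℕ) + l := by
    intro i
    have h1 := (hy i).1
    have h2 := (hy i).2
    have h0 : 0 ≤ (y i - x i) / l := div_nonneg (by linarith) hl.le
    have e : (y i - x i) / l * l = y i - x i := by field_simp
    have f1 := Nat.floor_le h0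
    have f2 := Nat.lt_floor_add_one ((y i - x i) / l)
    have h3 : ⌊(y i - x i) / l⌋₊ < n := by
      rw [Nat.floor_lt h0, div_lt_iff₀ hl]; linarith
    refine ⟨⟨_, h3⟩, ?_, ?_⟩
    · dsimp only; nlinarith
    · dsimp only; nlinarith
  choose p hp using h
  exact ⟨p, fun i => by rw [corner_apply]; exact hp i⟩

lemma tile_sum {f : E2 → ℝ} (hf : Continuous f) (h0 : ∀ y, 0 ≤ f y) (x : E2) {l : ℝ} (hl : 0 < l)
    (n : ℕ) : ∫ y in sqr x (n * l), f y ≤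
      ∑ p : Fin 2 → Fin n, ∫ y in sqr (corner x l p) l, f y := by
  simp_rw [← integral_indicator (sqr_meas _ _)]
  have hi : ∀ z r, Integrable ((sqr z r).indicator f) := fun z r =>
    (integrable_indicator_iff (sqr_meas _ _)).2 (sqr_int hf _ _)
  rw [← integral_finsetSum _ fun p _ => hi _ _]
  refine integral_mono (hi _ _) (integrable_finsetSum _ fun p _ => hi _ _) fun y => ?_
  have hnn : ∀ z r, 0 ≤ (sqr z r).indicator f y := fun z r => Set.indicator_nonneg (fun y _ => h0 y) y
  by_cases hy : y ∈ sqr x (n * l)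
  · obtain ⟨p, hp⟩ := cover x hl hy
    rw [Set.indicator_of_mem hy]
    have := Finset.single_le_sum (f := fun p : Fin 2 → Fin n => (sqr (corner x l p) l).indicator f y)
      (fun p _ => hnn _ _) (Finset.mem_univ p)
    simpa [Set.indicator_of_mem hp] using this
  · rw [Set.indicator_of_notMem hy]
    exact Finset.sum_nonneg fun p _ => hnn _ _

lemma tile_bound {f : E2 → ℝ} (hf : Continuous f) (h0 : ∀ y, 0 ≤ f y) (x : E2) {l : ℝ} (hl : 0 < l)
    (n : ℕ) (b : ℝ) (hb : ∀ z, ∫ y in sqr z l, f y ≤ b) (p0 : Fin 2 → Fin n)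
    (hp0 : ∫ y in sqr (corner x l p0) l, f y ≤ b / 2) :
    ∫ y in sqr x (n * l), f y ≤ ((n : ℝ) ^ 2 - 1 / 2) * b := by
  refine (tile_sum hf h0 x hl n).trans ?_
  rw [← Finset.add_sum_erase _ _ (Finset.mem_univ p0)]
  have h1 : ∑ p ∈ Finset.univ.erase p0, ∫ y in sqr (corner x l p) l, f y ≤
      ∑ p ∈ Finset.univ.erase p0, b := Finset.sum_le_sum fun p _ => hb _
  have hn : 1 ≤ n ^ 2 := Nat.one_le_pow _ _ (p0 0).pos
  rw [Finset.sum_const, Finset.card_erase_of_mem (Finset.mem_univ _), Finset.card_univ,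
    Fintype.card_fun, Fintype.card_fin, Fintype.card_fin, nsmul_eq_mul, Nat.cast_sub hn] at h1
  push_cast at h1
  linarith

lemma tile_dec {f : E2 → ℝ} (hf : Continuous f) (h0 : ∀ y, 0 ≤ f y) (x : E2) {r ε C : ℝ} (hr : 0 < r)
    (hC : 0 < C)
    (n : ℕ) (hn : (n : ℝ) ^ ε * ((n : ℝ) ^ 2 - 1 / 2) ≤ (n : ℝ) ^ 2)
    (hb : ∀ z, ∫ y in sqr z (r / n), f y ≤ C * (r / n) ^ (2 - ε)) (p0 : Fin 2 → Fin n)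
    (hp0 : ∫ y in sqr (corner x (r / n) p0) (r / n), f y ≤ C * (r / n) ^ (2 - ε) / 2) :
    ∫ y in sqr x r, f y ≤ C * r ^ (2 - ε) := by
  have hn0 : (0:ℝ) < n := by exact_mod_cast (p0 0).pos
  have h := tile_bound hf h0 x (div_pos hr hn0) n _ hb p0 hp0
  rw [mul_div_cancel₀ _ hn0.ne'] at h
  refine h.trans ?_
  rw [Real.div_rpow hr.le hn0.le, Real.rpow_sub hn0 2 ε, Real.rpow_two]
  have hP : 0 < C * r ^ (2 - ε) := by positivity
  have hne : 0 < (n:ℝ) ^ ε := by positivity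
  have : ((n : ℝ) ^ 2 - 1 / 2) * (C * (r ^ (2 - ε) / ((n:ℝ) ^ 2 / (n:ℝ) ^ ε))) =
      (C * r ^ (2 - ε)) * ((n : ℝ) ^ ε * ((n : ℝ) ^ 2 - 1 / 2)) / (n:ℝ) ^ 2 := by
    field_simp
  rw [this, div_le_iff₀ (by positivity)]
  exact mul_le_mul_of_nonneg_left hn hP.le

noncomputable def WW : ℝ := ∫ y, bw y

lemma WW_pos : 0 < WW := by
  have hc := bw_cont
  refine hc.integral_pos_of_hasCompactSupport_nonneg_nonzero bw_cs bw_nonneg (x := 0) ?_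
  simp [bw]

lemma VV_zero (v : E2 → ℝ) (x : E2) : VV v x 0 = WW * v x := by
  simp [VV, WW, integral_mul_const]

lemma VV_nonneg {v : E2 → ℝ} (hv : ∀ x, 0 ≤ v x) (x : E2) (r : ℝ) : 0 ≤ VV v x r :=
  integral_nonneg fun y => mul_nonneg (bw_nonneg y) (hv _)

lemma mm_nonneg {v : E2 → ℝ} (hv : ∀ x, 0 ≤ v x) (x : E2) (r : ℝ) : 0 ≤ mm v x r :=
  integral_nonneg fun y => mul_nonneg (bp_nonneg y) (hv _)

lemma VV_upper {v : E2 → ℝ} (hv : ContDiff ℝ 2 v) (x : E2) {s t D : ℝ} (hst : s ≤ t)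
    (h : ∀ ρ, s < ρ → ρ < t → ρ * mm (lap v) x ρ ≤ D) : VV v x t - VV v x s ≤ D * (t - s) := by
  refine (convex_Icc s t).image_sub_le_mul_sub_of_deriv_le
    (fun ρ _ => (hasDerivAt_VV hv x ρ).continuousAt.continuousWithinAt)
    (fun ρ _ => (hasDerivAt_VV hv x ρ).differentiableAt.differentiableWithinAt) ?_ s
    ⟨le_rfl, hst⟩ t ⟨hst, le_rfl⟩ hst
  intro ρ hρ
  rw [interior_Icc] at hρ
  rw [(hasDerivAt_VV hv x ρ).deriv]
  exact h ρ hρ.1 hρ.2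

lemma VV_lower {v : E2 → ℝ} (hv : ContDiff ℝ 2 v) (x : E2) {s t D : ℝ} (hst : s ≤ t)
    (h : ∀ ρ, s < ρ → ρ < t → D ≤ ρ * mm (lap v) x ρ) : D * (t - s) ≤ VV v x t - VV v x s := by
  refine (convex_Icc s t).mul_sub_le_image_sub_of_le_deriv
    (fun ρ _ => (hasDerivAt_VV hv x ρ).continuousAt.continuousWithinAt)
    (fun ρ _ => (hasDerivAt_VV hv x ρ).differentiableAt.differentiableWithinAt) ?_ s
    ⟨le_rfl, hst⟩ t ⟨hst, le_rfl⟩ hst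
  intro ρ hρ
  rw [interior_Icc] at hρ
  rw [(hasDerivAt_VV hv x ρ).deriv]
  exact h ρ hρ.1 hρ.2

lemma scaled_int {φ g : E2 → ℝ} (h1 : Continuous φ) (h2 : ∀ y, 1 ≤ ‖y‖ → φ y = 0) (h3 : Continuous g)
    (x : E2) {r : ℝ} (hr : 0 < r) : Integrable (fun q => φ (r⁻¹ • (q - x)) * g q) := by
  refine (Continuous.mul (h1.comp (by fun_prop)) h3).integrable_of_hasCompactSupport ?_
  apply HasCompactSupport.of_support_subset_isCompact (isCompact_closedBall x r)
  intro y hy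
  by_contra hc
  apply hy
  have : 1 ≤ ‖r⁻¹ • (y - x)‖ := by
    rw [norm_smul, Real.norm_of_nonneg (by positivity), inv_mul_eq_div, one_le_div hr]
    rw [mem_closedBall_iff_norm] at hc
    linarith
  simp [h2 _ this]

/-- Weak Harnack comparison. -/
lemma VV_compare {v : E2 → ℝ} (hc : Continuous v) (hv : ∀ x, 0 ≤ v x) (x y : E2) {s : ℝ} (hs : 0 < s)
    (h : ‖y - x‖ ≤ s) : VV v x s ≤ 32 * VV v y (4 * s) := by
  have h1 := cov bw v x hs
  have h2 := cov bw v y (show 0 < 4 * s by positivity)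
  have h3 : ∫ q, bw (s⁻¹ • (q - x)) * v q ≤ ∫ q, 2 * (bw ((4 * s)⁻¹ • (q - y)) * v q) := by
    refine integral_mono (scaled_int bw_cont (fun _ => bw_zero) hc x hs)
      ((scaled_int bw_cont (fun _ => bw_zero) hc y (by positivity)).const_mul 2) fun q => ?_
    dsimp only
    rw [← mul_assoc]
    refine mul_le_mul_of_nonneg_right ?_ (hv q)
    by_cases hq : 1 ≤ ‖s⁻¹ • (q - x)‖
    · rw [bw_zero hq]; exact mul_nonneg zero_le_two (bw_nonneg _)
    · rw [norm_smul, Real.norm_of_nonneg (by positivity), inv_mul_eq_div, one_le_div hs, not_le] at hq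
      have h4 : ‖q - y‖ ≤ 2 * s := by
        calc ‖q - y‖ = ‖(q - x) - (y - x)‖ := by congr 1; abel
          _ ≤ ‖q - x‖ + ‖y - x‖ := norm_sub_le _ _
          _ ≤ 2 * s := by linarith
      have h5 : ‖(4 * s)⁻¹ • (q - y)‖ ≤ 1 / 2 := by
        rw [norm_smul, Real.norm_of_nonneg (by positivity), inv_mul_eq_div, div_le_iff₀ (by positivity)]
        linarith
      have h6 : 1 / 2 ≤ bw ((4 * s)⁻¹ • (q - y)) := by
        unfold bw
        refine le_trans ?_ (le_max_left _ _)
        nlinarith [norm_nonneg ((4 * s)⁻¹ • (q - y))]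
      linarith [bw_le_one (s⁻¹ • (q - x))]
  rw [integral_const_mul, ← h1, ← h2] at h3
  have h4 : s ^ 2 * VV v x s ≤ s ^ 2 * (32 * VV v y (4 * s)) := by
    unfold VV; linarith
  exact le_of_mul_le_mul_left h4 (by positivity)

lemma mm_upper {f : E2 → ℝ} (hc : Continuous f) (hf : ∀ x, 0 ≤ f x) (y : E2) {ρ : ℝ} (hρ : 0 < ρ) :
    ρ ^ 2 * mm f y ρ ≤ 1 / 4 * ∫ q in sqr (WithLp.toLp 2 fun i => y i - ρ) (2 * ρ), f q := by
  have h1 := cov bp f y hρ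
  unfold mm
  rw [h1, ← integral_indicator (sqr_meas _ _), ← integral_const_mul]
  refine integral_mono (scaled_int bp_cont (fun _ => bp_zero) hc y hρ)
    (((integrable_indicator_iff (sqr_meas _ _)).2 (sqr_int hc _ _)).const_mul _) fun q => ?_
  dsimp only
  by_cases hq : 1 ≤ ‖ρ⁻¹ • (q - y)‖
  · rw [bp_zero hq]
    have := Set.indicator_nonneg (s := sqr (WithLp.toLp 2 fun i => y i - ρ) (2 * ρ)) (fun y _ => hf y) q
    rw [zero_mul]; positivity
  · rw [norm_smul, Real.norm_of_nonneg (by positivity), inv_mul_eq_div, one_le_div hρ, not_le] at hq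
    rw [Set.indicator_of_mem]
    · exact mul_le_mul_of_nonneg_right (bp_le _) (hf _)
    · intro i
      have := (coord_le (q - y) i).trans_lt hq
      rw [abs_lt, PiLp.sub_apply] at this
      dsimp only
      constructor <;> linarith

lemma mm_lower {f : E2 → ℝ} (hc : Continuous f) (hf : ∀ x, 0 ≤ f x) (z c : E2) {ρ t : ℝ} (hρ : 0 < ρ)
    (h : ∀ q ∈ sqr c t, ‖q - z‖ ^ 2 ≤ ρ ^ 2 / 2) :
    ∫ q in sqr c t, f q ≤ 16 * (ρ ^ 2 * mm f z ρ) := by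
  have h1 := cov bp f z hρ
  unfold mm
  rw [h1, ← integral_indicator (sqr_meas _ _), ← integral_const_mul]
  refine integral_mono ((integrable_indicator_iff (sqr_meas _ _)).2 (sqr_int hc _ _))
    ((scaled_int bp_cont (fun _ => bp_zero) hc z hρ).const_mul _) fun q => ?_
  dsimp only
  by_cases hq : q ∈ sqr c t
  · rw [Set.indicator_of_mem hq, ← mul_assoc]
    refine le_mul_of_one_le_left (hf q) ?_
    have h2 : ‖ρ⁻¹ • (q - z)‖ ^ 2 ≤ 1 / 2 := by
      rw [norm_smul, Real.norm_of_nonneg (by positivity), inv_mul_eq_div, div_pow,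
        div_le_iff₀ (by positivity)]
      linarith [h q hq]
    have h3 : 1 / 2 ≤ max (1 - ‖ρ⁻¹ • (q - z)‖ ^ 2) 0 := le_trans (by linarith) (le_max_left _ _)
    unfold bp
    nlinarith
  · rw [Set.indicator_of_notMem hq]
    have := bp_nonneg (ρ⁻¹ • (q - z))
    have := hf q
    positivity

lemma exists_point {v : E2 → ℝ} (hc : Continuous v) (z : E2) {ρ A : ℝ} (hρ : 0 < ρ)
    (h : A < VV v z ρ) : ∃ x0, ‖x0 - z‖ ≤ ρ ∧ A < WW * v x0 := by
  by_contra! hcon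
  have hW := WW_pos
  have : VV v z ρ ≤ ∫ y, bw y * (A / WW) := by
    refine integral_mono (int_cs bw_cont bw_cs (by fun_prop)) (int_cs bw_cont bw_cs continuous_const)
      fun y => ?_
    dsimp only
    by_cases hy : 1 ≤ ‖y‖
    · simp [bw_zero hy]
    · refine mul_le_mul_of_nonneg_left ?_ (bw_nonneg y)
      rw [le_div_iff₀ hW, mul_comm]
      apply hcon
      rw [add_sub_cancel_left, norm_smul, Real.norm_of_nonneg hρ.le]
      push Not at hy
      nlinarith
  rw [integral_mul_const] at this
  change _ ≤ WW * (A / WW) at this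
  rw [mul_div_cancel₀ _ hW.ne'] at this
  linarith

lemma rpow_cmp {a b ε : ℝ} (ha : 0 < a) (hab : a ≤ b) (hε : ε ≤ 1) :
    a ^ (2 - ε) ≤ a / b * b ^ (2 - ε) := by
  have hb : 0 < b := ha.trans_le hab
  have h1 : a ^ (2 - ε) = a * a ^ (1 - ε) := by
    rw [show 2 - ε = 1 + (1 - ε) by ring, Real.rpow_add ha, Real.rpow_one]
  have h2 : b ^ (2 - ε) = b * b ^ (1 - ε) := by
    rw [show 2 - ε = 1 + (1 - ε) by ring, Real.rpow_add hb, Real.rpow_one]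
  rw [h1, h2]
  have h3 : a ^ (1 - ε) ≤ b ^ (1 - ε) := Real.rpow_le_rpow ha.le hab (by linarith)
  have : a / b * (b * b ^ (1 - ε)) = a * b ^ (1 - ε) := by field_simp
  rw [this]
  exact mul_le_mul_of_nonneg_left h3 ha.le

lemma rpow_cmp' {a b ε : ℝ} (ha : 0 < a) (hab : a ≤ b) (hε : 0 ≤ ε) :
    (a / b) ^ 2 * b ^ (2 - ε) ≤ a ^ (2 - ε) := by
  have hb : 0 < b := ha.trans_le hab
  rw [Real.rpow_sub ha, Real.rpow_sub hb, Real.rpow_two, Real.rpow_two]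
  have h3 : a ^ ε ≤ b ^ ε := Real.rpow_le_rpow ha.le hab hε
  have : (a / b) ^ 2 * (b ^ 2 / b ^ ε) = a ^ 2 / b ^ ε := by field_simp
  rw [this]
  have : 0 < a ^ ε := by positivity
  gcongr

lemma main_step {v : E2 → ℝ} {B C ε : ℝ} (hv : ContDiff ℝ 2 v) (hv0 : ∀ x, 0 ≤ v x)
    (hf0 : ∀ x, 0 ≤ lap v x) (hfB : ∀ x, lap v x ≤ B * Real.exp (-(2 * v x)))
    (hB : 0 < B) (hC : 0 < C) (hε0 : 0 ≤ ε) (hε1 : ε ≤ 1)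
    (hCB : 2 ^ 18 * B * WW ≤ C ^ 2) (N : ℕ) (hN : (N : ℝ) = 2 ^ 21)
    (h8 : ((8 : ℕ) : ℝ) ^ ε * (((8 : ℕ) : ℝ) ^ 2 - 1 / 2) ≤ ((8 : ℕ) : ℝ) ^ 2)
    (hNε : (N : ℝ) ^ ε * ((N : ℝ) ^ 2 - 1 / 2) ≤ (N : ℝ) ^ 2)
    {r : ℝ} (hr : 1 ≤ r)
    (IH : ∀ ρ, 0 < ρ → ρ ≤ r / 2 → ∀ x, ∫ y in sqr x ρ, lap v y ≤ C * ρ ^ (2 - ε)) (x : E2) :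
    ∫ y in sqr x r, lap v y ≤ C * r ^ (2 - ε) := by
  by_contra! hcon
  have hr0 : 0 < r := by linarith
  have hW := WW_pos
  have hfc := lap_cont hv
  have hvc := hv.continuous
  set P := C * r ^ (2 - ε) with hP
  have hP0 : 0 < P := by positivity
  -- step 1
  have hmass : P / 128 < ∫ y in sqr (corner x (r / 8) (fun _ => (3 : Fin 8))) (r / 8), lap v y := by
    by_contra! h
    have h1 := tile_dec hfc hf0 x hr0 hC 8 h8
      (by intro z; exact IH _ (by push_cast; linarith) (by push_cast; linarith) z) (fun _ => (3 : Fin 8)) (by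
        push_cast
        refine h.trans ?_
        have := rpow_cmp' (a := r / 8) (b := r) (ε := ε) (by linarith) (by linarith) hε0
        rw [show r / 8 / r = 1 / 8 by field_simp] at this
        rw [hP]
        have := mul_le_mul_of_nonneg_left this hC.le
        linarith)
    linarith
  set mB := ∫ y in sqr (corner x (r / 8) (fun _ => (3 : Fin 8))) (r / 8), lap v y with hmB
  set z : E2 := WithLp.toLp 2 fun i => x i + 7 * r / 16 with hz
  have hzi : ∀ i, z i = x i + 7 * r / 16 := fun i => rfl
  have hV : P / 2 ^ 12 < VV v z (r / 4) := by
    have h1 : mB / (4 * r) * (r / 4 - r / 8) ≤ VV v z (r / 4) - VV v z (r / 8) := by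
      refine VV_lower hv z (by linarith) fun ρ h1 h2 => ?_
      have hρ : 0 < ρ := by linarith
      have h3 := mm_lower hfc hf0 z (corner x (r / 8) (fun _ => (3 : Fin 8))) (t := r / 8) hρ (by
        intro q hq
        have h4 : ‖q - z‖ ≤ ρ * (Real.sqrt 2)⁻¹ := by
          refine norm_le_of_coord (b := r / 16) (fun i => ?_) (by positivity) ?_
          · have := hq i
            rw [corner_apply] at this
            have e : (((3 : Fin 8) : ℕ) : ℝ) = 3 := by norm_cast
            rw [e] at this
            rw [PiLp.sub_apply, hzi, abs_le]
            constructor <;> linarith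
          · rw [mul_pow, inv_pow, Real.sq_sqrt (by norm_num)]
            nlinarith
        calc ‖q - z‖ ^ 2 ≤ (ρ * (Real.sqrt 2)⁻¹) ^ 2 := by gcongr
          _ = ρ ^ 2 / 2 := by rw [mul_pow, inv_pow, Real.sq_sqrt (by norm_num)]; ring)
      rw [← hmB] at h3
      rw [div_le_iff₀ (by positivity)]
      have h5 : 0 ≤ mm (lap v) z ρ := mm_nonneg hf0 _ _
      have h6 : 0 ≤ (r / 4 - ρ) * (ρ * mm (lap v) z ρ) :=
        mul_nonneg (by linarith) (mul_nonneg hρ.le h5)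
      nlinarith
    have h2 : mB / (4 * r) * (r / 4 - r / 8) = mB / 32 := by field_simp; ring
    have h3 := VV_nonneg hv0 z (r / 8)
    rw [h2] at h1
    norm_num at hmass ⊢
    linarith
  obtain ⟨x0, hx0z, hx0⟩ := exists_point hvc z (by linarith) hV
  -- step 2
  set s := r / 2 ^ 20 with hs
  have hs0 : 0 < s := by positivity
  have hlow : ∀ y, ‖y - x0‖ ≤ s → P / 2 ^ 18 ≤ WW * v y := by
    intro y hy
    have h1 := VV_compare hvc hv0 x0 y hs0 hy
    have h2 : 0 * (s - 0) ≤ VV v x0 s - VV v x0 0 := VV_lower hv x0 hs0.le fun ρ h _ =>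
      mul_nonneg h.le (mm_nonneg hf0 _ _)
    rw [VV_zero] at h2
    have h3 : VV v y (4 * s) - VV v y 0 ≤ P / (2 * r) * (4 * s - 0) := by
      refine VV_upper hv y (by linarith) fun ρ h3 h4 => ?_
      have h5 := mm_upper hfc hf0 y h3
      have h6 := IH (2 * ρ) (by linarith) (by rw [hs] at h4; norm_num at h4; linarith)
        (WithLp.toLp 2 fun i => y i - ρ)
      have h7 := rpow_cmp (a := 2 * ρ) (b := r) (ε := ε) (by linarith)
        (by rw [hs] at h4; norm_num at h4; linarith) hε1
      have h8 : C * (2 * ρ) ^ (2 - ε) ≤ 2 * ρ / r * P := by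
        calc C * (2 * ρ) ^ (2 - ε) ≤ C * (2 * ρ / r * r ^ (2 - ε)) := by gcongr
          _ = _ := by rw [hP]; ring
      have h9 : ρ * (ρ * mm (lap v) y ρ) ≤ ρ * (P / (2 * r)) := by
        have : 2 * ρ / r * P = 4 * (ρ * (P / (2 * r))) := by field_simp; norm_num
        nlinarith
      exact le_of_mul_le_mul_left h9 h3
    rw [VV_zero] at h3
    have h4 : P / (2 * r) * (4 * s - 0) = P / 2 ^ 19 := by rw [hs]; field_simp; ring
    rw [h4] at h3
    norm_num at hx0 h3 ⊢
    linarith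
  -- step 3
  have hN0 : (0:ℝ) < N := by rw [hN]; norm_num
  have hx0Q : x0 ∈ sqr x (N * (r / N)) := by
    rw [mul_div_cancel₀ _ hN0.ne']
    intro i
    have h1 := (coord_le (x0 - z) i).trans hx0z
    rw [PiLp.sub_apply, hzi, abs_le] at h1
    constructor <;> linarith
  obtain ⟨p, hp⟩ := cover x (div_pos hr0 hN0) hx0Q
  set l := r / N with hl
  have hl0 : 0 < l := div_pos hr0 hN0
  have hsl : s = 2 * l := by rw [hs, hl, hN]; ring
  have hlr : l ≤ r / 2 := by
    rw [hl, hN, div_le_div_iff₀ (by norm_num) (by norm_num)]; norm_num; linarith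
  have hrP : C * r ≤ P := by
    rw [hP]
    have : r ^ (1:ℝ) ≤ r ^ (2 - ε) := Real.rpow_le_rpow_of_exponent_le hr (by linarith)
    rw [Real.rpow_one] at this
    gcongr
  have hfin := tile_dec hfc hf0 x hr0 hC N hNε (fun z => IH _ hl0 hlr z) p (by
    have h1 : ∫ y in sqr (corner x l p) l, lap v y ≤ (B * (2 ^ 17 * WW / P)) * l ^ 2 := by
      refine mass_le hfc _ hl0.le fun y hy => ?_
      have h2 : ‖y - x0‖ ≤ s := by
        refine norm_le_of_coord (b := l) (fun i => ?_) hs0.le (by rw [hsl]; nlinarith)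
        have a1 := hy i
        have a2 := hp i
        rw [PiLp.sub_apply, abs_le]
        constructor <;> linarith
      have h3 := hlow y h2
      refine (hfB y).trans (mul_le_mul_of_nonneg_left ?_ hB.le)
      rw [Real.exp_neg]
      have h4 : P / (2 ^ 17 * WW) ≤ 2 * v y := by
        rw [div_le_iff₀ (by positivity)]
        norm_num at h3 ⊢
        linarith
      have h5 : P / (2 ^ 17 * WW) ≤ Real.exp (2 * v y) := by
        linarith [Real.add_one_le_exp (2 * v y)]
      rw [← inv_div P (2 ^ 17 * WW)]
      exact inv_anti₀ (by positivity) h5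
    refine h1.trans ?_
    have h2 := rpow_cmp' (a := l) (b := r) (ε := ε) hl0 (by linarith) hε0
    have h3 : (l / r) ^ 2 * P / 2 ≤ C * l ^ (2 - ε) / 2 := by
      have := mul_le_mul_of_nonneg_left h2 hC.le
      rw [hP]; linarith
    refine le_trans ?_ h3
    have h4 : 2 ^ 18 * B * WW * r ^ 2 ≤ P ^ 2 := by
      calc 2 ^ 18 * B * WW * r ^ 2 ≤ C ^ 2 * r ^ 2 := by gcongr
        _ = (C * r) ^ 2 := by ring
        _ ≤ P ^ 2 := by gcongr
    have e1 : B * (2 ^ 17 * WW / P) * l ^ 2 = (2 ^ 18 * B * WW * r ^ 2) * (l ^ 2 / (2 * P * r ^ 2)) := by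
      field_simp
    have e2 : (l / r) ^ 2 * P / 2 = P ^ 2 * (l ^ 2 / (2 * P * r ^ 2)) := by
      field_simp
    rw [e1, e2]
    exact mul_le_mul_of_nonneg_right h4 (by positivity))
  linarith

lemma growth {v : E2 → ℝ} {B C ε : ℝ} (hv : ContDiff ℝ 2 v) (hv0 : ∀ x, 0 ≤ v x)
    (hf0 : ∀ x, 0 ≤ lap v x) (hfB : ∀ x, lap v x ≤ B * Real.exp (-(2 * v x)))
    (hB : 0 < B) (hC : 0 < C) (hε0 : 0 ≤ ε) (hε1 : ε ≤ 1) (hBC : B ≤ C)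
    (hCB : 2 ^ 18 * B * WW ≤ C ^ 2) (N : ℕ) (hN : (N : ℝ) = 2 ^ 21)
    (h8 : ((8 : ℕ) : ℝ) ^ ε * (((8 : ℕ) : ℝ) ^ 2 - 1 / 2) ≤ ((8 : ℕ) : ℝ) ^ 2)
    (hNε : (N : ℝ) ^ ε * ((N : ℝ) ^ 2 - 1 / 2) ≤ (N : ℝ) ^ 2) (k : ℕ) :
    ∀ ρ : ℝ, 0 < ρ → ρ ≤ 2 ^ k → ∀ x, ∫ y in sqr x ρ, lap v y ≤ C * ρ ^ (2 - ε) := by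
  have base : ∀ ρ : ℝ, 0 < ρ → ρ ≤ 1 → ∀ x, ∫ y in sqr x ρ, lap v y ≤ C * ρ ^ (2 - ε) := by
    intro ρ h0 h1 x
    have h2 : ∫ y in sqr x ρ, lap v y ≤ B * ρ ^ 2 := by
      refine mass_le (lap_cont hv) x h0.le fun y _ => (hfB y).trans ?_
      have : Real.exp (-(2 * v y)) ≤ 1 := Real.exp_le_one_iff.2 (by linarith [hv0 y])
      nlinarith
    refine h2.trans ?_
    have h3 := rpow_cmp' (a := ρ) (b := 1) h0 h1 hε0
    rw [div_one, Real.one_rpow, mul_one] at h3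
    gcongr
  induction k with
  | zero => intro ρ h0 h1; exact base ρ h0 (by simpa using h1)
  | succ k ih =>
    intro ρ h0 h1 x
    rcases le_total ρ 1 with h | h
    · exact base ρ h0 h x
    · refine main_step hv hv0 hf0 hfB hB hC hε0 hε1 hCB N hN h8 hNε h (fun σ a b => ih σ a ?_) x
      rw [pow_succ] at h1; linarith

lemma exists_eps : ∃ ε : ℝ, 0 < ε ∧ ε ≤ 1 ∧ ∃ N : ℕ, (N : ℝ) = 2 ^ 21 ∧
    ((8 : ℕ) : ℝ) ^ ε * (((8 : ℕ) : ℝ) ^ 2 - 1 / 2) ≤ ((8 : ℕ) : ℝ) ^ 2 ∧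
    (N : ℝ) ^ ε * ((N : ℝ) ^ 2 - 1 / 2) ≤ (N : ℝ) ^ 2 := by
  have h : ∀ a : ℝ, 1 < a → ∀ᶠ ε in nhdsWithin (0:ℝ) (Set.Ioi 0), a ^ ε * (a ^ 2 - 1 / 2) ≤ a ^ 2 := by
    intro a ha
    have h1 : Filter.Tendsto (fun ε : ℝ => a ^ ε * (a ^ 2 - 1 / 2)) (nhdsWithin 0 (Set.Ioi 0))
        (nhds (a ^ (0:ℝ) * (a ^ 2 - 1 / 2))) := by
      refine Filter.Tendsto.mono_left ?_ nhdsWithin_le_nhds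
      exact ((Real.continuous_const_rpow (by linarith)).mul continuous_const).tendsto 0
    rw [Real.rpow_zero] at h1
    exact h1.eventually (ge_mem_nhds (by linarith))
  have h1 : ∀ᶠ ε in nhdsWithin (0:ℝ) (Set.Ioi 0), ε ≤ 1 :=
    nhdsWithin_le_nhds (ge_mem_nhds one_pos)
  obtain ⟨ε, ⟨⟨a, b⟩, c⟩, d⟩ := (((h ((8:ℕ):ℝ) (by norm_num)).and
    (h (((2 ^ 21 : ℕ)) : ℝ) (by norm_num))).and h1).and self_mem_nhdsWithin |>.exists
  exact ⟨ε, d, c, 2 ^ 21, by norm_num, a, b⟩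

lemma lap_sub (M : ℝ) (u : E2 → ℝ) (x : E2) : lap (fun y => M - u y) x = - lap u x := by
  unfold lap
  rw [← Finset.sum_neg_distrib]
  refine Finset.sum_congr rfl fun i _ => ?_
  have : (fun y => fderiv ℝ (fun y => M - u y) y (EuclideanSpace.single i 1)) =
      fun y => - fderiv ℝ u y (EuclideanSpace.single i 1) := by
    ext y; rw [fderiv_const_sub]; rfl
  rw [this, fderiv_fun_neg]; rfl

theorem stmt14 (M lam Lam : ℝ) (hlam : 0 < lam) (hLam : lam ≤ Lam) :
    ∃ ε > (0 : ℝ), ∃ C > (0 : ℝ),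
      ∀ (K : EuclideanSpace ℝ (Fin 2) → ℝ) (u : EuclideanSpace ℝ (Fin 2) → ℝ),
        Measurable K → (∀ x, lam ≤ K x ∧ K x ≤ Lam) →
        ContDiff ℝ 2 u → (∀ x, u x ≤ M) →
        (∀ x, lap u x + K x * Real.exp (2 * u x) = 0) →
        ∀ R : ℝ, 1 ≤ R →
          (∫ x in Metric.ball (0 : EuclideanSpace ℝ (Fin 2)) R, Real.exp (2 * u x)) ≤
            C * R ^ (2 - ε) := by
  obtain ⟨ε, hε0, hε1, N, hN, h8, hNε⟩ := exists_eps
  have hW := WW_pos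
  set B := Lam * Real.exp (2 * M) with hBdef
  have hB : 0 < B := mul_pos (by linarith) (Real.exp_pos _)
  set C := B + 2 ^ 18 * WW + 1 with hCdef
  have hC : 0 < C := by positivity
  have hBC : B ≤ C := by rw [hCdef]; nlinarith
  have hCB : 2 ^ 18 * B * WW ≤ C ^ 2 := by
    have h1 : 2 ^ 18 * WW ≤ C := by rw [hCdef]; linarith
    calc 2 ^ 18 * B * WW = B * (2 ^ 18 * WW) := by ring
      _ ≤ C * C := by gcongr
      _ = C ^ 2 := by ring
  refine ⟨ε, hε0, lam⁻¹ * (C * 2 ^ (2 - ε)), by positivity, ?_⟩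
  intro K u _ hK hu huM heq R hR
  have hR0 : 0 < R := by linarith
  have hlap : ∀ x, lap (fun y => M - u y) x = K x * Real.exp (2 * u x) := fun x => by
    rw [lap_sub]; linarith [heq x]
  have hv : ContDiff ℝ 2 (fun y => M - u y) := contDiff_const.sub hu
  have hf0 : ∀ x, 0 ≤ lap (fun y => M - u y) x := fun x => by
    rw [hlap]; exact mul_nonneg (hlam.le.trans (hK x).1) (Real.exp_pos _).le
  obtain ⟨k, hk⟩ := pow_unbounded_of_one_lt (2 * R) (one_lt_two (α := ℝ))
  have hg := growth hv (fun x => by linarith [huM x]) hf0 (B := B) (C := C) (ε := ε) (fun x => by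
      rw [hlap, hBdef, mul_assoc, ← Real.exp_add, show 2 * M + -(2 * (M - u x)) = 2 * u x by ring]
      exact mul_le_mul_of_nonneg_right (hK x).2 (Real.exp_pos _).le)
    hB hC hε0.le hε1 hBC hCB N hN h8 hNε k (2 * R) (by linarith) hk.le (WithLp.toLp 2 fun _ => -R)
  have hsub : Metric.ball (0 : E2) R ⊆ sqr (WithLp.toLp 2 fun _ => -R) (2 * R) := by
    intro y hy i
    rw [mem_ball_zero_iff] at hy
    have := (coord_le y i).trans_lt hy
    rw [abs_lt] at this
    dsimp only
    constructor <;> linarith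
  have huc := hu.continuous
  have hec : Continuous fun x => Real.exp (2 * u x) := by fun_prop
  have hlc := lap_cont hv
  calc ∫ x in Metric.ball (0 : E2) R, Real.exp (2 * u x)
      ≤ ∫ x in sqr (WithLp.toLp 2 fun _ => -R) (2 * R), Real.exp (2 * u x) :=
        setIntegral_mono_set (sqr_int hec _ _)
          (Filter.Eventually.of_forall fun x => (Real.exp_pos _).le) hsub.eventuallyLE
    _ ≤ ∫ x in sqr (WithLp.toLp 2 fun _ => -R) (2 * R), lam⁻¹ * lap (fun y => M - u y) x := by
        refine setIntegral_mono_on (sqr_int hec _ _) ((sqr_int hlc _ _).const_mul _) (sqr_meas _ _)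
          fun x _ => ?_
        rw [hlap, ← mul_assoc]
        refine le_mul_of_one_le_left (Real.exp_pos _).le ?_
        rw [inv_mul_eq_div, one_le_div hlam]; exact (hK x).1
    _ = lam⁻¹ * ∫ x in sqr (WithLp.toLp 2 fun _ => -R) (2 * R), lap (fun y => M - u y) x :=
        integral_const_mul _ _
    _ ≤ lam⁻¹ * (C * (2 * R) ^ (2 - ε)) := by gcongr
    _ = lam⁻¹ * (C * 2 ^ (2 - ε)) * R ^ (2 - ε) := by
        rw [Real.mul_rpow (by norm_num) hR0.le]; ring
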